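/- Let S₁, …, S_k be finite sets such that |S_i ∩ S_j| ≤ 1 for all i ≠ j, and let T be any finite set. Then Σ_{i=1}^{k} |S_i ∩ T| ≤ |T| + k·√|T|. -/

import Mathlib

/-- **Pairwise almost-disjoint sets cannot all intersect a set much more than `√|T|`.**
If `S₁, …, S_k` are finite sets with `|Sᵢ ∩ Sⱼ| ≤ 1` for `i ≠ j`, then for every finite set
`T`, `Σᵢ |Sᵢ ∩ T| ≤ |T| + k·√|T|` (over the reals). -/
theorem sum_inter_card_le {α : Type*} [DecidableEq α] (k : ℕ)
    (S : Fin k → Finset α) (hS : ∀ i j, i ≠ j → (S i ∩ S j).card ≤ 1) (T : Finset α) :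
    ∑ i, ((S i ∩ T).card : ℝ) ≤ (T.card : ℝ) + k * Real.sqrt T.card := by
  have hcard : ∀ A : Finset α, ((A ∩ T).card : ℝ) = ∑ t ∈ T, if t ∈ A then (1 : ℝ) else 0 := by
    intro A
    rw [Finset.sum_boole, Finset.filter_mem_eq_inter, Finset.inter_comm]
  set N : ℝ := ∑ i, ((S i ∩ T).card : ℝ) with hN
  have h1 : N = ∑ t ∈ T, ∑ i, if t ∈ S i then (1 : ℝ) else 0 := by
    rw [hN, Finset.sum_comm]
    exact Finset.sum_congr rfl fun i _ => hcard (S i)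
  have h2 : ∑ t ∈ T, (∑ i, if t ∈ S i then (1 : ℝ) else 0) ^ 2
      = ∑ i, ∑ j, ((S i ∩ S j ∩ T).card : ℝ) := by
    simp_rw [hcard, sq, Finset.sum_mul_sum]
    rw [Finset.sum_comm]
    refine Finset.sum_congr rfl fun i _ => ?_
    rw [Finset.sum_comm]
    refine Finset.sum_congr rfl fun j _ => Finset.sum_congr rfl fun t _ => ?_
    by_cases a : t ∈ S i <;> by_cases b : t ∈ S j <;> simp [a, b]
  have h3 : ∑ i, ∑ j, ((S i ∩ S j ∩ T).card : ℝ) ≤ N + (k : ℝ) ^ 2 := by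
    have : ∀ i j, ((S i ∩ S j ∩ T).card : ℝ)
        ≤ (if i = j then ((S i ∩ T).card : ℝ) else 0) + 1 := by
      intro i j
      by_cases h : i = j
      · subst h; simp
      · have := (Finset.card_le_card
          (Finset.inter_subset_left (s₁ := S i ∩ S j) (s₂ := T))).trans (hS i j h)
        simpa [h] using this
    refine (Finset.sum_le_sum fun i _ => Finset.sum_le_sum fun j _ => this i j).trans ?_
    simp [Finset.sum_add_distrib, hN, sq]
  have h4 : N ^ 2 ≤ T.card * (N + (k : ℝ) ^ 2) := by
    rw [h1]
    refine (sq_sum_le_card_mul_sum_sq).trans ?_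
    rw [h2, ← h1]
    gcongr
  by_contra! hlt
  have hs := Real.sq_sqrt (Nat.cast_nonneg (α := ℝ) T.card)
  have hs0 := Real.sqrt_nonneg (T.card : ℝ)
  set s := Real.sqrt (T.card : ℝ)
  rw [← hs] at h4 hlt
  have hk : (0 : ℝ) ≤ k := Nat.cast_nonneg k
  have hks : 0 ≤ (k : ℝ) * s := mul_nonneg hk hs0
  have h5 : (s ^ 2 + k * s) * (k * s) < N * (N - s ^ 2) :=
    mul_lt_mul'' hlt (by linarith) (by positivity) hks
  have h6 : 0 ≤ s ^ 2 * (k * s) := by positivity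
  nlinarith
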